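/- The subalgebras of the crystal lattice C have the congruence extension property: if A ⊆ B are subalgebras of C and Θ is a congruence of A (with respect to the operations ∧, ∨, ¬, · inherited from C), then there exists a congruence Φ of B such that Φ ∩ (A × A) = Θ. -/

import Mathlib

/-- The universe of the crystal lattice `C`: six elements `⊥, t, a, b, f, ⊤`. -/
inductive Cry : Type
  | bot | t | a | b | f | top
  deriving DecidableEq

namespace Cry

/-- The lattice order of `C`: `⊥ < t < a < f < ⊤` and `t < b < f`, with `a, b` incomparable. -/
def leb : Cry → Cry → Bool
  | bot, _ => true
  | _, top => true
  | t, bot => false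
  | t, _ => true
  | a, a => true
  | a, f => true
  | a, _ => false
  | b, b => true
  | b, f => true
  | b, _ => false
  | f, f => true
  | f, _ => false
  | top, _ => false

/-- Meet: the only incomparable pair is `{a, b}`, whose meet is `t`. -/
def meet (x y : Cry) : Cry := if leb x y then x else if leb y x then y else t

/-- Join: the only incomparable pair is `{a, b}`, whose join is `f`. -/
def join (x y : Cry) : Cry := if leb x y then y else if leb y x then x else f

/-- The involution `¬`. -/
def neg : Cry → Cry
  | bot => top
  | t => f
  | a => a
  | b => b
  | f => t
  | top => bot

/-- Fusion `·`: commutative with identity `t`; `⊥·x = ⊥`; `⊤·x = ⊤` for `x ≠ ⊥`;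
`a·a = a`; `b·b = b`; and `a·b = a·f = b·f = f·f = ⊤`. -/
def fus : Cry → Cry → Cry
  | bot, _ => bot
  | _, bot => bot
  | top, _ => top
  | _, top => top
  | t, x => x
  | x, t => x
  | a, a => a
  | b, b => b
  | _, _ => top

/-- A subalgebra of `C`: a nonempty subset closed under `∧`, `∨`, `·`, and `¬`. -/
def IsSubalg (S : Set Cry) : Prop :=
  S.Nonempty ∧
  (∀ x ∈ S, ∀ y ∈ S, meet x y ∈ S ∧ join x y ∈ S ∧ fus x y ∈ S) ∧
  (∀ x ∈ S, neg x ∈ S)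

/-- A congruence on the subset `S` (with the operations inherited from `C`):
an equivalence relation on `S` compatible with `∧`, `∨`, `·`, and `¬`. -/
def IsCongOn (S : Set Cry) (r : Cry → Cry → Prop) : Prop :=
  (∀ x ∈ S, r x x) ∧
  (∀ x ∈ S, ∀ y ∈ S, r x y → r y x) ∧
  (∀ x ∈ S, ∀ y ∈ S, ∀ z ∈ S, r x y → r y z → r x z) ∧
  (∀ x ∈ S, ∀ y ∈ S, ∀ u ∈ S, ∀ v ∈ S, r x y → r u v →
      r (meet x u) (meet y v) ∧ r (join x u) (join y v) ∧ r (fus x u) (fus y v)) ∧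
  (∀ x ∈ S, ∀ y ∈ S, r x y → r (neg x) (neg y))

end Cry

/-!
Every subalgebra of `C` has only the identity and the total congruence, and both extend to any
larger subalgebra. The reason is that fusion is residuated with residual `x → y = ¬(x · ¬y)`, and
`x ≤ y` if and only if `t ≤ x → y`. Since `⊥` is the only element not above `t`, `x ≰ y` forces
`x → y = ⊥`, while `y → y ≠ ⊥`. Hence `z ↦ ⊤ · (z → y)` sends `x` to `⊥` and `y` to `⊤`, so a
congruence identifying `x` with `y` identifies `⊥` with `⊤`, and then everything.
-/

namespace Cry

theorem leb_antisymm {x y : Cry} (hxy : leb x y) (hyx : leb y x) : x = y := by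
  cases x <;> cases y <;> first | rfl | contradiction

theorem join_bot (x : Cry) : join x bot = x := by
  cases x <;> rfl

theorem join_top (x : Cry) : join x top = top := by
  cases x <;> rfl

theorem neg_eq_bot_iff {x : Cry} : neg x = bot ↔ x = top := by
  cases x <;> decide

theorem top_fus_of_ne_bot {x : Cry} (hx : x ≠ bot) : fus top x = top := by
  cases x <;> first | rfl | exact absurd rfl hx

theorem fus_neg_self_ne_top (x : Cry) : fus x (neg x) ≠ top := by
  cases x <;> decide

theorem fus_neg_eq_top_of_not_leb {x y : Cry} (h : ¬ leb x y) : fus x (neg y) = top := by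
  cases x <;> cases y <;> first | rfl | exact absurd rfl h

theorem isCongOn_eq (S : Set Cry) : IsCongOn S (· = ·) := by
  refine ⟨fun _ _ => rfl, fun _ _ _ _ => Eq.symm, fun _ _ _ _ _ _ => Eq.trans, ?_, ?_⟩
  · rintro x - y - u - v - rfl rfl
    exact ⟨rfl, rfl, rfl⟩
  · rintro x - y - rfl
    rfl

theorem isCongOn_total (S : Set Cry) : IsCongOn S fun _ _ => True := by
  simp only [IsCongOn, implies_true, and_self]

section Congruence

variable {S : Set Cry} {r : Cry → Cry → Prop} {x y : Cry}

theorem IsCongOn.bot_top_of_not_leb (hr : IsCongOn S r) (hS : IsSubalg S) (hx : x ∈ S)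
    (hy : y ∈ S) (hxy : r x y) (hle : ¬ leb x y) : bot ∈ S ∧ top ∈ S ∧ r bot top := by
  obtain ⟨-, hops, hneg⟩ := hS
  obtain ⟨hrefl, -, -, hr_ops, hr_neg⟩ := hr
  have fus_mem {u v : Cry} (hu : u ∈ S) (hv : v ∈ S) : fus u v ∈ S := (hops u hu v hv).2.2
  have fus_congr {u v w : Cry} (hu : u ∈ S) (hv : v ∈ S) (hw : w ∈ S) (huv : r u v) :
      r (fus u w) (fus v w) := (hr_ops u hu v hv w hw w hw huv (hrefl w hw)).2.2
  have hny : neg y ∈ S := hneg y hy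
  have x_fus : fus x (neg y) = top := fus_neg_eq_top_of_not_leb hle
  have htop : top ∈ S := x_fus ▸ fus_mem hx hny
  have hbot : bot ∈ S := hneg top htop
  have hres : neg (fus y (neg y)) ∈ S := hneg _ (fus_mem hy hny)
  have bot_res : r bot (neg (fus y (neg y))) := by
    have h := hr_neg _ (fus_mem hx hny) _ (fus_mem hy hny) (fus_congr hx hy hny hxy)
    rwa [x_fus] at h
  have top_fus_res : fus top (neg (fus y (neg y))) = top :=
    top_fus_of_ne_bot (neg_eq_bot_iff.not.mpr (fus_neg_self_ne_top y))
  refine ⟨hbot, htop, ?_⟩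
  have h := (hr_ops top htop top htop bot hbot _ hres (hrefl top htop) bot_res).2.2
  rwa [top_fus_res] at h

theorem IsCongOn.bot_top_of_ne (hr : IsCongOn S r) (hS : IsSubalg S) (hx : x ∈ S)
    (hy : y ∈ S) (hxy : r x y) (hne : x ≠ y) : bot ∈ S ∧ top ∈ S ∧ r bot top := by
  by_cases hle : leb x y
  · have hnle : ¬ leb y x := fun hyx => hne (leb_antisymm hle hyx)
    exact hr.bot_top_of_not_leb hS hy hx (hr.2.1 x hx y hy hxy) hnle
  · exact hr.bot_top_of_not_leb hS hx hy hxy hle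

theorem IsCongOn.total_of_bot_top (hr : IsCongOn S r) (hbot : bot ∈ S) (htop : top ∈ S)
    (h : r bot top) (hx : x ∈ S) (hy : y ∈ S) : r x y := by
  obtain ⟨hrefl, hsymm, htrans, hr_ops, -⟩ := hr
  have rel_top {u : Cry} (hu : u ∈ S) : r u top := by
    have hjoin := (hr_ops u hu u hu bot hbot top htop (hrefl u hu) h).2.1
    rwa [join_bot, join_top] at hjoin
  exact htrans x hx top htop y hy (rel_top hx) (hsymm y hy top htop (rel_top hy))

theorem IsCongOn.eq_or_total (hr : IsCongOn S r) (hS : IsSubalg S) :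
    (∀ x ∈ S, ∀ y ∈ S, r x y ↔ x = y) ∨ ∀ x ∈ S, ∀ y ∈ S, r x y := by
  by_cases hdistinct : ∃ x ∈ S, ∃ y ∈ S, r x y ∧ x ≠ y
  · obtain ⟨x, hx, y, hy, hxy, hne⟩ := hdistinct
    obtain ⟨hbot, htop, h⟩ := hr.bot_top_of_ne hS hx hy hxy hne
    exact .inr fun u hu v hv => hr.total_of_bot_top hbot htop h hu hv
  · push Not at hdistinct
    exact .inl fun x hx y hy => ⟨hdistinct x hx y hy, fun h => h ▸ hr.1 x hx⟩

end Congruence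

end Cry

/-- The subalgebras of `C` have the congruence extension property. -/
theorem crystal_CEP (A B : Set Cry) (hA : Cry.IsSubalg A) (hB : Cry.IsSubalg B)
    (hAB : A ⊆ B) (Θ : Cry → Cry → Prop) (hΘ : Cry.IsCongOn A Θ) :
    ∃ Φ : Cry → Cry → Prop, Cry.IsCongOn B Φ ∧ ∀ x ∈ A, ∀ y ∈ A, (Φ x y ↔ Θ x y) := by
  obtain hΘ_eq | hΘ_total := hΘ.eq_or_total hA
  · exact ⟨(· = ·), Cry.isCongOn_eq B, fun x hx y hy => (hΘ_eq x hx y hy).symm⟩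
  · exact ⟨fun _ _ => True, Cry.isCongOn_total B,
      fun x hx y hy => (true_iff _).mpr (hΘ_total x hx y hy)⟩
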